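/- Let σ ∈ (0,2) be fixed, let N be a prime, let c ≥ N be a real number, let φ be an even Schwartz function with supp(φ̂) ⊂ (−σ,σ), and let H : (0,4π) → ℂ be twice continuously differentiable with |H(x)| ≤ C₀·x, |H′(x)| ≤ C₀ and |H″(x)| ≤ C₀ for all x ∈ (0,4π) and some constant C₀ ≥ 0. Then the function Ψ(s) := (1/log N) ∫_0^∞ x^{s−1} φ̂(log x/log N) H(4π√x/c) dx (whose integrand is supported in N^{−σ} < x < N^{σ}, where 4π√x/c ∈ (0,4π)) is an entire function of s, and there is a constant C depending only on σ, φ and C₀ such that |Ψ(s)| ≤ C · N^{σ|Re(s)+1/2|}/((|s|+1)²·c) for all s ∈ ℂ. -/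

import Mathlib

open MeasureTheory Real Complex

/-- The Fourier transform `φ̂(ξ) = ∫_ℝ φ(x) e^{-2πixξ} dx` of a real-valued function. -/
noncomputable def fourierHat (φ : ℝ → ℝ) (ξ : ℝ) : ℂ :=
  ∫ x : ℝ, (φ x : ℂ) * Complex.exp (-2 * π * Complex.I * x * ξ)

/-- The Mellin-type transform `Ψ(s) = (1/log N) ∫_0^∞ x^{s-1} φ̂(log x / log N) H(4π√x/c) dx`. -/
noncomputable def PsiTransform (φ : ℝ → ℝ) (N : ℕ) (c : ℝ) (H : ℝ → ℂ) (s : ℂ) : ℂ :=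
  (1 / (Real.log N : ℂ)) * ∫ x in Set.Ioi (0 : ℝ),
    (x : ℂ) ^ (s - 1) * fourierHat φ (Real.log x / Real.log N) * H (4 * π * Real.sqrt x / c)

lemma ibp_once (z : ℂ) (σ : ℝ) (hσ : 0 < σ) (F F' : ℝ → ℂ)
    (hF : ∀ t ∈ Set.Icc (-σ) σ, HasDerivAt F (F' t) t)
    (hc : ContinuousOn F' (Set.Icc (-σ) σ)) (h1 : F (-σ) = 0) (h2 : F σ = 0) :
    z * ∫ t in (-σ)..σ, cexp (z * t) * F t = - ∫ t in (-σ)..σ, cexp (z * t) * F' t := by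
  have hle : -σ ≤ σ := by linarith
  have key := intervalIntegral.integral_mul_deriv_eq_deriv_mul (a := -σ) (b := σ)
    (u := fun t : ℝ => cexp (z * t)) (u' := fun t : ℝ => cexp (z * t) * z) (v := F) (v' := F')
    (fun t _ => by
      have : HasDerivAt (fun t : ℝ => z * (t : ℂ)) z t := by
        simpa using (Complex.ofRealCLM.hasDerivAt (x := t)).const_mul z
      exact this.cexp)
    (fun t ht => hF t (by rwa [Set.uIcc_of_le hle] at ht))
    (Continuous.intervalIntegrable (by fun_prop) _ _)
    (ContinuousOn.intervalIntegrable (by rwa [Set.uIcc_of_le hle]))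
  rw [key, h1, h2, ← intervalIntegral.integral_const_mul]
  simp only [mul_zero, sub_zero, zero_sub, neg_neg]
  congr 1; ext t; ring

lemma ibp_twice (z : ℂ) (σ : ℝ) (hσ : 0 < σ) (F F' F'' : ℝ → ℂ)
    (hF : ∀ t ∈ Set.Icc (-σ) σ, HasDerivAt F (F' t) t)
    (hF' : ∀ t ∈ Set.Icc (-σ) σ, HasDerivAt F' (F'' t) t)
    (hc : ContinuousOn F'' (Set.Icc (-σ) σ)) (h1 : F (-σ) = 0) (h2 : F σ = 0)
    (h3 : F' (-σ) = 0) (h4 : F' σ = 0) :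
    z ^ 2 * ∫ t in (-σ)..σ, cexp (z * t) * F t = ∫ t in (-σ)..σ, cexp (z * t) * F'' t := by
  rw [pow_two, mul_assoc, ibp_once z σ hσ F F' hF
    (fun t ht => (hF' t ht).continuousAt.continuousWithinAt) h1 h2, mul_neg,
    ibp_once z σ hσ F' F'' hF' hc h3 h4, neg_neg]

lemma differentiable_expint (L : ℝ) (σ : ℝ) (hσ : 0 < σ) (F : ℝ → ℂ)
    (hc : ContinuousOn F (Set.Icc (-σ) σ)) :
    Differentiable ℂ (fun s : ℂ => ∫ t in (-σ)..σ, cexp (s * L * t) * F t) := by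
  intro s
  have hle : -σ ≤ σ := by linarith
  have hm : ∀ G : ℝ → ℂ, ContinuousOn G (Set.Icc (-σ) σ) →
      IntervalIntegrable G volume (-σ) σ := fun G hG =>
    ContinuousOn.intervalIntegrable (by rwa [Set.uIcc_of_le hle])
  have hk : ∀ s : ℂ, ContinuousOn (fun t : ℝ => cexp (s * L * t) * F t) (Set.Icc (-σ) σ) :=
    fun s => ContinuousOn.mul (by fun_prop) hc
  obtain ⟨K, hK⟩ := isCompact_Icc.exists_bound_of_continuousOn hc
  have h := intervalIntegral.hasDerivAt_integral_of_dominated_loc_of_deriv_le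
    (μ := volume) (a := -σ) (b := σ) (x₀ := s) (s := Metric.ball s 1)
    (F := fun (s : ℂ) (t : ℝ) => cexp (s * L * t) * F t)
    (F' := fun (s : ℂ) (t : ℝ) => cexp (s * L * t) * (L * t) * F t)
    (bound := fun _ => Real.exp ((‖s‖ + 1) * |L| * σ) * (|L| * σ) * K)
    (Metric.ball_mem_nhds s one_pos)
    (Filter.Eventually.of_forall fun x => by
      exact (hm _ (hk x)).def'.aestronglyMeasurable)
    (hm _ (hk s))
    (by
      have : ContinuousOn (fun t : ℝ => cexp (s * L * t) * (L * t) * F t) (Set.Icc (-σ) σ) :=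
        ContinuousOn.mul (by fun_prop) hc
      exact (hm _ this).def'.aestronglyMeasurable)
    (Filter.Eventually.of_forall fun t ht x hx => by
      rw [Set.uIoc_of_le hle] at ht
      have ht' : |t| ≤ σ := abs_le.2 ⟨ht.1.le, ht.2⟩
      have hx' : ‖x‖ ≤ ‖s‖ + 1 := by
        have := norm_sub_norm_le x s
        rw [mem_ball_iff_norm] at hx
        linarith
      have hb : ‖x * L * t‖ ≤ (‖s‖ + 1) * |L| * σ := by
        rw [norm_mul, norm_mul, Complex.norm_real, Complex.norm_real, Real.norm_eq_abs,
          Real.norm_eq_abs]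
        gcongr
      have he : ‖cexp (x * L * t)‖ ≤ Real.exp ((‖s‖ + 1) * |L| * σ) := by
        rw [Complex.norm_exp]
        exact Real.exp_le_exp.2 ((Complex.re_le_norm _).trans hb)
      have hF := hK t ⟨ht.1.le, ht.2⟩
      rw [norm_mul, norm_mul, norm_mul, Complex.norm_real, Complex.norm_real, Real.norm_eq_abs,
          Real.norm_eq_abs]
      gcongr)
    (by simp)
    (Filter.Eventually.of_forall fun t ht x hx => by
      have : HasDerivAt (fun s : ℂ => s * L * (t : ℂ)) (L * t) x := by
        simpa [mul_assoc] using (hasDerivAt_id x).mul_const ((L : ℂ) * t)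
      exact this.cexp.mul_const _)
  exact h.2.differentiableAt

lemma cov (L : ℝ) (hL : 0 < L) (f : ℝ → ℂ) :
    ∫ x in Set.Ioi (0 : ℝ), f x = ∫ t : ℝ, ((L * Real.exp (L * t) : ℝ) : ℂ) * f (Real.exp (L * t)) := by
  have himg : (fun t : ℝ => Real.exp (L * t)) '' Set.univ = Set.Ioi 0 := by
    ext x
    simp only [Set.image_univ, Set.mem_range, Set.mem_Ioi]
    constructor
    · rintro ⟨t, rfl⟩; positivity
    · intro hx
      exact ⟨Real.log x / L, by rw [mul_div_cancel₀ _ hL.ne', Real.exp_log hx]⟩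
  rw [← himg, integral_image_eq_integral_abs_deriv_smul (f' := fun t => L * Real.exp (L * t))
    MeasurableSet.univ, setIntegral_univ]
  · congr 1; ext t
    rw [abs_of_pos (by positivity)]; rfl
  · intro t _
    have : HasDerivAt (fun t : ℝ => L * t) L t := by simpa using (hasDerivAt_id t).const_mul L
    have := this.exp
    rw [mul_comm] at this
    exact this.hasDerivWithinAt
  · intro a _ b _ hab
    exact mul_left_cancel₀ hL.ne' (Real.exp_injective hab)

lemma fourierHat_schwartz (φ : SchwartzMap ℝ ℝ) :
    ∃ g : SchwartzMap ℝ ℂ, fourierHat (fun x => φ x) = g := by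
  refine ⟨FourierTransform.fourier (SchwartzMap.postcompCLM (𝕜 := ℝ) Complex.ofRealCLM φ), ?_⟩
  ext ξ
  rw [SchwartzMap.fourier_coe, Real.fourier_eq']
  unfold fourierHat
  congr 1; ext x
  simp
  ring_nf

lemma Psi_eq (σ : ℝ) (hσ0 : 0 < σ) (φ : ℝ → ℝ)
    (hsupp : Function.support (fourierHat φ) ⊆ Set.Ioo (-σ) σ)
    (N : ℕ) (hL : 0 < Real.log N) (c : ℝ) (H : ℝ → ℂ) (s : ℂ) :
    PsiTransform φ N c H s = ∫ t in (-σ)..σ, cexp (s * (Real.log N : ℝ) * t) *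
      (fourierHat φ t * H (4 * π * Real.exp (Real.log N * t / 2) / c)) := by
  unfold PsiTransform
  set L := Real.log N with hLdef
  rw [cov L hL, intervalIntegral.integral_of_le (by linarith),
    setIntegral_eq_integral_of_forall_compl_eq_zero, ← integral_const_mul]
  · congr 1; ext t
    rw [Real.log_exp, mul_div_cancel_left₀ _ hL.ne', Real.exp_half]
    have hLc : (L : ℂ) ≠ 0 := by exact_mod_cast hL.ne'
    have h1 : ((Real.exp (L * t) : ℝ) : ℂ) ^ (s - 1) * ((Real.exp (L * t) : ℝ) : ℂ)
        = cexp (s * L * t) := by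
      have hne : ((Real.exp (L * t) : ℝ) : ℂ) ≠ 0 := by exact_mod_cast (Real.exp_pos _).ne'
      rw [Complex.cpow_def_of_ne_zero hne, ← Complex.ofReal_log (Real.exp_pos _).le, Real.log_exp,
        Complex.ofReal_exp, ← Complex.exp_add]
      congr 1; push_cast; ring
    rw [← h1]
    push_cast
    field_simp
  · intro t ht
    have : fourierHat φ t = 0 := by
      by_contra h
      exact ht (Set.Ioo_subset_Ioc_self (hsupp h))
    simp [this]

lemma g_facts (σ : ℝ) (hσ0 : 0 < σ) (g : SchwartzMap ℝ ℂ)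
    (hsupp : Function.support g ⊆ Set.Ioo (-σ) σ) :
    g (-σ) = 0 ∧ g σ = 0 ∧ deriv g (-σ) = 0 ∧ deriv g σ = 0 := by
  have hz : ∀ t, t ∉ Set.Ioo (-σ) σ → g t = 0 := fun t ht => by
    by_contra h
    exact ht (hsupp h)
  have hd : ∀ t, HasDerivAt g (deriv g t) t := fun t => g.differentiableAt.hasDerivAt
  have h1 : g (-σ) = 0 := hz _ (by simp)
  have h2 : g σ = 0 := hz _ (by simp)
  refine ⟨h1, h2, ?_, ?_⟩
  · have e1 : HasDerivWithinAt g 0 (Set.Iic (-σ)) (-σ) :=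
      (hasDerivWithinAt_const (-σ) (Set.Iic (-σ)) (0 : ℂ)).congr
        (fun x hx => hz x (fun h => absurd h.1 (not_lt.2 hx))) h1
    exact (uniqueDiffWithinAt_Iic _).eq_deriv _ (hd _).hasDerivWithinAt e1
  · have e1 : HasDerivWithinAt g 0 (Set.Ici σ) σ :=
      (hasDerivWithinAt_const σ (Set.Ici σ) (0 : ℂ)).congr
        (fun x hx => hz x (fun h => absurd h.2 (not_lt.2 hx))) h2
    exact (uniqueDiffWithinAt_Ici _).eq_deriv _ (hd _).hasDerivWithinAt e1

lemma H_facts (H : ℝ → ℂ) (U : Set ℝ) (hU : IsOpen U) (hH : ContDiffOn ℝ 2 H U) :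
    (∀ x ∈ U, HasDerivAt H (deriv H x) x) ∧ (∀ x ∈ U, HasDerivAt (deriv H) (deriv (deriv H) x) x) ∧
    ContinuousOn (deriv (deriv H)) U := by
  have h1 : ContDiffOn ℝ 1 (deriv H) U := hH.deriv_of_isOpen hU (by norm_num)
  have h2 : ContDiffOn ℝ 0 (deriv (deriv H)) U := h1.deriv_of_isOpen hU (by norm_num)
  refine ⟨fun x hx => ?_, fun x hx => ?_, h2.continuousOn⟩
  · exact ((hH.differentiableOn (by norm_num)).differentiableAt (hU.mem_nhds hx)).hasDerivAt
  · exact ((h1.differentiableOn (by norm_num)).differentiableAt (hU.mem_nhds hx)).hasDerivAt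

/-- pointwise exponential bound -/
lemma exp_pt (s : ℂ) (L σ t c : ℝ) (hL : 0 < L) (ht : |t| ≤ σ) (hc : 0 < c) :
    ‖cexp (s * L * t)‖ * (4 * π * Real.exp (L * t / 2) / c)
      ≤ 4 * π / c * Real.exp (L * (σ * |s.re + 1 / 2|)) := by
  have e : ‖cexp (s * L * t)‖ = Real.exp (s.re * L * t) := by
    rw [Complex.norm_exp]; simp
  have h : Real.exp (s.re * L * t) * Real.exp (L * t / 2) ≤
      Real.exp (L * (σ * |s.re + 1 / 2|)) := by
    rw [← Real.exp_add]
    apply Real.exp_le_exp.2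
    have : s.re * L * t + L * t / 2 = L * (t * (s.re + 1 / 2)) := by ring
    rw [this]
    refine mul_le_mul_of_nonneg_left ?_ hL.le
    refine (le_abs_self _).trans ?_
    rw [abs_mul]
    gcongr
  rw [e]
  calc _ = 4 * π / c * (Real.exp (s.re * L * t) * Real.exp (L * t / 2)) := by ring
    _ ≤ _ := by gcongr

lemma int_bound (s : ℂ) (L σ c K : ℝ) (hL : 0 < L) (hσ : 0 < σ) (hc : 0 < c) (hK : 0 ≤ K)
    (F : ℝ → ℂ)
    (hF : ∀ t ∈ Set.Icc (-σ) σ, ‖F t‖ ≤ K * (4 * π * Real.exp (L * t / 2) / c)) :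
    ‖∫ t in (-σ)..σ, cexp (s * L * t) * F t‖ ≤
      K * (4 * π / c * Real.exp (L * (σ * |s.re + 1 / 2|))) * (2 * σ) := by
  have := intervalIntegral.norm_integral_le_of_norm_le_const (a := -σ) (b := σ)
    (f := fun t : ℝ => cexp (s * L * t) * F t)
    (C := K * (4 * π / c * Real.exp (L * (σ * |s.re + 1 / 2|)))) (fun t ht => by
      rw [Set.uIoc_of_le (by linarith)] at ht
      rw [norm_mul]
      calc _ ≤ ‖cexp (s * L * t)‖ * (K * (4 * π * Real.exp (L * t / 2) / c)) := by
            gcongr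
            exact hF t ⟨ht.1.le, ht.2⟩
        _ = K * (‖cexp (s * L * t)‖ * (4 * π * Real.exp (L * t / 2) / c)) := by ring
        _ ≤ _ :=
            mul_le_mul_of_nonneg_left (exp_pt s L σ t c hL (abs_le.2 ⟨ht.1.le, ht.2⟩) hc) hK)
  have e : |σ - -σ| = 2 * σ := by rw [abs_of_pos (by linarith)]; ring
  rwa [e] at this

lemma F2_bound (g g' g'' h h' h'' : ℂ) (M C₀ L y : ℝ) (hL : 1 / 2 ≤ L) (hM : 0 ≤ M) (hC : 0 ≤ C₀)
    (hy : 0 ≤ y) (hy4 : y ≤ 4 * π) (h1 : ‖g‖ ≤ M) (h2 : ‖g'‖ ≤ M) (h3 : ‖g''‖ ≤ M)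
    (k1 : ‖h‖ ≤ C₀ * y) (k2 : ‖h'‖ ≤ C₀) (k3 : ‖h''‖ ≤ C₀) :
    ‖(g'' * h + g' * (h' * ((L / 2 * y : ℝ) : ℂ))) +
      (g' * (h' * ((L / 2 * y : ℝ) : ℂ)) + g * (h'' * ((L / 2 * y : ℝ) : ℂ) * ((L / 2 * y : ℝ) : ℂ) +
        h' * ((L / 2 * (L / 2 * y) : ℝ) : ℂ)))‖ ≤ 10 * M * C₀ * L ^ 2 * y := by
  have hL0 : 0 ≤ L := by linarith
  have n1 : ‖((L / 2 * y : ℝ) : ℂ)‖ = L / 2 * y := by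
    rw [Complex.norm_real, Real.norm_of_nonneg (by positivity)]
  have n2 : ‖((L / 2 * (L / 2 * y) : ℝ) : ℂ)‖ = L / 2 * (L / 2 * y) := by
    rw [Complex.norm_real, Real.norm_of_nonneg (by positivity)]
  have a1 : ‖g'' * h‖ ≤ M * (C₀ * y) := by rw [norm_mul]; gcongr
  have a2 : ‖g' * (h' * ((L / 2 * y : ℝ) : ℂ))‖ ≤ M * (C₀ * (L / 2 * y)) := by
    rw [norm_mul, norm_mul, n1]; gcongr
  have a3 : ‖g * (h'' * ((L / 2 * y : ℝ) : ℂ) * ((L / 2 * y : ℝ) : ℂ) +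
        h' * ((L / 2 * (L / 2 * y) : ℝ) : ℂ))‖ ≤
      M * (C₀ * (L / 2 * y) * (L / 2 * (4 * π)) + C₀ * (L / 2 * (L / 2 * y))) := by
    rw [norm_mul]
    gcongr
    refine (norm_add_le _ _).trans ?_
    rw [norm_mul, norm_mul, norm_mul, n1, n2]
    gcongr
  refine (norm_add_le _ _).trans ((add_le_add (norm_add_le _ _) (norm_add_le _ _)).trans ?_)
  have hp : π < 3.15 := Real.pi_lt_d2
  have q : 1 + L + L ^ 2 * π + L ^ 2 / 4 ≤ 10 * L ^ 2 := by nlinarith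
  have : M * C₀ * y * (1 + L + L ^ 2 * π + L ^ 2 / 4) ≤ M * C₀ * y * (10 * L ^ 2) := by gcongr
  linarith


theorem PsiTransform_entire_and_bounded (σ : ℝ) (hσ0 : 0 < σ) (hσ2 : σ < 2)
    (φ : SchwartzMap ℝ ℝ) (heven : ∀ x : ℝ, φ (-x) = φ x)
    (hsupp : Function.support (fourierHat (fun x => φ x)) ⊆ Set.Ioo (-σ) σ)
    (C₀ : ℝ) (hC₀ : 0 ≤ C₀) :
    ∃ C : ℝ, ∀ N : ℕ, N.Prime → ∀ c : ℝ, (N : ℝ) ≤ c → ∀ H : ℝ → ℂ,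
      ContDiffOn ℝ 2 H (Set.Ioo 0 (4 * π)) →
      (∀ x ∈ Set.Ioo (0 : ℝ) (4 * π), ‖H x‖ ≤ C₀ * x) →
      (∀ x ∈ Set.Ioo (0 : ℝ) (4 * π), ‖deriv H x‖ ≤ C₀) →
      (∀ x ∈ Set.Ioo (0 : ℝ) (4 * π), ‖deriv (deriv H) x‖ ≤ C₀) →
      Differentiable ℂ (PsiTransform (fun x => φ x) N c H) ∧
      ∀ s : ℂ, ‖PsiTransform (fun x => φ x) N c H s‖
        ≤ C * (N : ℝ) ^ (σ * |s.re + 1 / 2|) / ((‖s‖ + 1) ^ 2 * c) := by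
  obtain ⟨g, hg⟩ := fourierHat_schwartz φ
  have hsupp' : Function.support g ⊆ Set.Ioo (-σ) σ := hg ▸ hsupp
  obtain ⟨z1, z2, z3, z4⟩ := g_facts σ hσ0 g hsupp'
  obtain ⟨gd1, gd2, gc2⟩ := H_facts g Set.univ isOpen_univ (g.smooth 2).contDiffOn
  have gc0 : ContinuousOn g (Set.Icc (-σ) σ) := g.continuous.continuousOn
  have gc1 : ContinuousOn (deriv g) (Set.Icc (-σ) σ) :=
    fun t _ => (gd2 t trivial).continuousAt.continuousWithinAt
  have gc2 : ContinuousOn (deriv (deriv g)) (Set.Icc (-σ) σ) := gc2.mono (Set.subset_univ _)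
  obtain ⟨M0, hM0⟩ := isCompact_Icc.exists_bound_of_continuousOn gc0
  obtain ⟨M1, hM1⟩ := isCompact_Icc.exists_bound_of_continuousOn gc1
  obtain ⟨M2, hM2⟩ := isCompact_Icc.exists_bound_of_continuousOn gc2
  obtain ⟨M, hM, hMM0, hMM1, hMM2⟩ : ∃ M : ℝ, 0 ≤ M ∧ M0 ≤ M ∧ M1 ≤ M ∧ M2 ≤ M :=
    ⟨|M0| + |M1| + |M2|, by positivity,
      by linarith [le_abs_self M0, abs_nonneg M1, abs_nonneg M2],
      by linarith [le_abs_self M1, abs_nonneg M0, abs_nonneg M2],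
      by linarith [le_abs_self M2, abs_nonneg M1, abs_nonneg M0]⟩
  refine ⟨2 * (11 * M * C₀) * (4 * π) * (2 * σ), fun N hN c hc H hH b0 b1 b2 => ?_⟩
  have hN2 : (2 : ℝ) ≤ N := by exact_mod_cast hN.two_le
  have hNpos : (0 : ℝ) < N := by linarith
  have hcpos : 0 < c := by linarith
  have hLhalf : 1 / 2 ≤ Real.log N := by
    have := Real.log_le_log (by norm_num) hN2
    linarith [Real.log_two_gt_d9]
  have hLpos : 0 < Real.log N := by linarith
  have hPsi := Psi_eq σ hσ0 (fun x => φ x) hsupp N hLpos c H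
  rw [hg] at hPsi
  have hrpow : ∀ a : ℝ, (N : ℝ) ^ a = Real.exp (Real.log N * a) :=
    fun a => Real.rpow_def_of_pos hNpos a
  simp only [hrpow]
  have hNexp : Real.exp (Real.log N) ≤ c := by rwa [Real.exp_log hNpos]
  set L := Real.log N with hLdef
  clear_value L
  obtain ⟨Hd1, Hd2, Hc2⟩ := H_facts H _ isOpen_Ioo hH
  let y : ℝ → ℝ := fun t => 4 * π * Real.exp (L * t / 2) / c
  have hy0 : ∀ t, 0 < y t := fun t => by positivity
  have hyU : ∀ t ∈ Set.Icc (-σ) σ, y t ∈ Set.Ioo (0 : ℝ) (4 * π) := fun t ht => by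
    refine ⟨hy0 t, ?_⟩
    have : Real.exp (L * t / 2) < c := by
      refine lt_of_lt_of_le (Real.exp_lt_exp.2 ?_) hNexp
      nlinarith [ht.2]
    show 4 * π * Real.exp (L * t / 2) / c < 4 * π
    rw [div_lt_iff₀ hcpos]
    gcongr
  have hyd : ∀ t, HasDerivAt y (L / 2 * y t) t := fun t => by
    have e : HasDerivAt (fun t : ℝ => L * t / 2) (L / 2) t := by
      simpa using ((hasDerivAt_id t).const_mul L).div_const 2
    have := (e.exp.const_mul (4 * π)).div_const c
    have e2 : 4 * π * (Real.exp (L * t / 2) * (L / 2)) / c = L / 2 * y t := by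
      show _ = L / 2 * (4 * π * Real.exp (L * t / 2) / c)
      ring
    rw [e2] at this
    exact this
  have hyd1 : ∀ t, HasDerivAt (fun t => ((L / 2 * y t : ℝ) : ℂ))
      ((L / 2 * (L / 2 * y t) : ℝ) : ℂ) t :=
    fun t => ((hyd t).const_mul (L / 2)).ofReal_comp
  have hycont : Continuous y := continuous_iff_continuousAt.2 fun t => (hyd t).continuousAt
  have comp : ∀ (G : ℝ → ℂ) (G' : ℂ) (t : ℝ), HasDerivAt G G' (y t) →
      HasDerivAt (fun t => G (y t)) (G' * ((L / 2 * y t : ℝ) : ℂ)) t := fun G G' t hG => by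
    have := hG.scomp t (hyd t)
    rw [Complex.real_smul, mul_comm] at this
    exact this
  let F : ℝ → ℂ := fun t => g t * H (y t)
  let F' : ℝ → ℂ := fun t => deriv g t * H (y t) + g t * (deriv H (y t) * ((L / 2 * y t : ℝ) : ℂ))
  let F'' : ℝ → ℂ := fun t =>
    (deriv (deriv g) t * H (y t) + deriv g t * (deriv H (y t) * ((L / 2 * y t : ℝ) : ℂ))) +
    (deriv g t * (deriv H (y t) * ((L / 2 * y t : ℝ) : ℂ)) +
      g t * (deriv (deriv H) (y t) * ((L / 2 * y t : ℝ) : ℂ) * ((L / 2 * y t : ℝ) : ℂ) +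
        deriv H (y t) * ((L / 2 * (L / 2 * y t) : ℝ) : ℂ)))
  have hF : ∀ t ∈ Set.Icc (-σ) σ, HasDerivAt F (F' t) t := fun t ht =>
    (gd1 t trivial).mul (comp _ _ t (Hd1 _ (hyU t ht)))
  have hF' : ∀ t ∈ Set.Icc (-σ) σ, HasDerivAt F' (F'' t) t := fun t ht =>
    ((gd2 t trivial).mul (comp _ _ t (Hd1 _ (hyU t ht)))).add
      ((gd1 t trivial).mul ((comp _ _ t (Hd2 _ (hyU t ht))).mul (hyd1 t)))
  have hFc : ContinuousOn F (Set.Icc (-σ) σ) :=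
    fun t ht => (hF t ht).continuousAt.continuousWithinAt
  have cH0 : ContinuousOn (fun t => H (y t)) (Set.Icc (-σ) σ) :=
    fun t ht => (comp _ _ t (Hd1 _ (hyU t ht))).continuousAt.continuousWithinAt
  have cH1 : ContinuousOn (fun t => deriv H (y t)) (Set.Icc (-σ) σ) :=
    fun t ht => (comp _ _ t (Hd2 _ (hyU t ht))).continuousAt.continuousWithinAt
  have cH2 : ContinuousOn (fun t => deriv (deriv H) (y t)) (Set.Icc (-σ) σ) :=
    Hc2.comp hycont.continuousOn hyU
  have cy1 : ContinuousOn (fun t => ((L / 2 * y t : ℝ) : ℂ)) (Set.Icc (-σ) σ) := by fun_prop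
  have cy2 : ContinuousOn (fun t => ((L / 2 * (L / 2 * y t) : ℝ) : ℂ)) (Set.Icc (-σ) σ) := by
    fun_prop
  have hFc2 : ContinuousOn F'' (Set.Icc (-σ) σ) :=
    ((gc2.mul cH0).add (gc1.mul (cH1.mul cy1))).add
      ((gc1.mul (cH1.mul cy1)).add (gc0.mul (((cH2.mul cy1).mul cy1).add (cH1.mul cy2))))
  have hPsi' : ∀ s, PsiTransform (fun x => φ x) N c H s =
      ∫ t in (-σ)..σ, cexp (s * L * t) * F t := hPsi
  constructor
  · have := differentiable_expint L σ hσ0 F hFc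
    rwa [← funext hPsi'] at this
  · intro s
    rw [hPsi' s]
    have B0 := int_bound s L σ c (M * C₀) hLpos hσ0 hcpos (by positivity) F (fun t ht => by
      show ‖g t * H (y t)‖ ≤ M * C₀ * y t
      rw [norm_mul, mul_assoc]
      gcongr
      · exact (hM0 t ht).trans hMM0
      · exact b0 _ (hyU t ht))
    have B2 := int_bound s L σ c (10 * M * C₀ * L ^ 2) hLpos hσ0 hcpos (by positivity) F''
      (fun t ht => F2_bound _ _ _ _ _ _ M C₀ L (y t) hLhalf hM hC₀ (hy0 t).le (hyU t ht).2.le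
        ((hM0 t ht).trans hMM0) ((hM1 t ht).trans hMM1) ((hM2 t ht).trans hMM2)
        (b0 _ (hyU t ht)) (b1 _ (hyU t ht)) (b2 _ (hyU t ht)))
    have I2 := ibp_twice (s * L) σ hσ0 F F' F'' hF hF' hFc2 (by simp [F, z1]) (by simp [F, z2])
      (by simp [F', z1, z3]) (by simp [F', z2, z4])
    rw [← I2, norm_mul, norm_pow, norm_mul, Complex.norm_real, Real.norm_of_nonneg hLpos.le] at B2
    set P := ‖∫ t in (-σ)..σ, cexp (s * L * t) * F t‖ with hP
    set E := Real.exp (L * (σ * |s.re + 1 / 2|)) with hE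
    have hP0 : 0 ≤ P := norm_nonneg _
    clear_value P E
    have B2' : ‖s‖ ^ 2 * P ≤ 10 * M * C₀ * (4 * π / c * E) * (2 * σ) := by
      have hL2 : 0 < L ^ 2 := by positivity
      refine le_of_mul_le_mul_left ?_ hL2
      linarith
    have hfin : P * (‖s‖ + 1) ^ 2 ≤ 2 * (11 * M * C₀) * (4 * π / c * E) * (2 * σ) := by
      nlinarith [mul_nonneg hP0 (sq_nonneg (‖s‖ - 1))]
    have hs : 0 < (‖s‖ + 1) ^ 2 := by positivity
    calc P ≤ 2 * (11 * M * C₀) * (4 * π / c * E) * (2 * σ) / (‖s‖ + 1) ^ 2 := by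
          rwa [le_div_iff₀ hs]
      _ = _ := by field_simp
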